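/- arXiv:2511.19138 — 2 statements merged into one kernel-verified Lean document; each statement's English description precedes it below -/
import Mathlib

section
/- Let m ≥ 1 and let G = QB_m(q_1, …, q_m) be a quasi-banana graph. Set k_{m-1} = Σ_{i=1}^{m-1} q_i + 1 and k_m = Σ_{i=1}^{m} q_i + 1, and assume k_m > 2. Then the divisor D' = (k_{m-1}+1)·u_{m-1,1} + Σ_{j=1}^{q_m} u_{m,j} is the unique u_{m-1,1}-reduced divisor on G of degree k_m + 1 and rank 2; that is, D' is the only u_{m-1,1}-reduced divisor realising the second gonality of G. -/
open Finset

variable {V : Type*} [Fintype V] [DecidableEq V]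

/-- A finite loopless multigraph on vertex type `V`, given by symmetric edge multiplicities. -/
structure Multigraph (V : Type*) [Fintype V] [DecidableEq V] where
  mult : V → V → ℕ
  symm : ∀ u v, mult u v = mult v u
  loopless : ∀ v, mult v v = 0

namespace Multigraph

def Adj (G : Multigraph V) (u v : V) : Prop := 0 < G.mult u v

/-- A graph is connected. -/
def Connected (G : Multigraph V) : Prop :=
  Nonempty V ∧ ∀ u v : V, Relation.ReflTransGen G.Adj u v

/-- Valence of a vertex. -/
def valence (G : Multigraph V) (v : V) : ℕ := ∑ u, G.mult v u

/-- The Laplacian applied to an integer-valued function on the vertices. -/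
def laplacian (G : Multigraph V) (f : V → ℤ) : V → ℤ :=
  fun w => ∑ u, (G.mult w u : ℤ) * (f w - f u)

/-- Degree of a divisor. -/
def degree (D : V → ℤ) : ℤ := ∑ v, D v

/-- A divisor is effective if all coefficients are nonnegative. -/
def Effective (D : V → ℤ) : Prop := ∀ v, 0 ≤ D v

/-- Linear equivalence of divisors: they differ by a sequence of chip-firing moves,
equivalently by a Laplacian of an integer function. -/
def LinEquiv (G : Multigraph V) (D D' : V → ℤ) : Prop :=
  ∃ f : V → ℤ, D' = D - G.laplacian f

/-- A divisor is winnable if it is linearly equivalent to an effective divisor. -/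
def Winnable (G : Multigraph V) (D : V → ℤ) : Prop :=
  ∃ E : V → ℤ, Effective E ∧ G.LinEquiv D E

/-- The Baker–Norine rank of a divisor: the largest `r` such that `D - E` is winnable for
every effective divisor `E` of degree `r` (the defining set contains all negative integers,
and its supremum is `-1` precisely when `D` itself is not winnable). -/
noncomputable def rank (G : Multigraph V) (D : V → ℤ) : ℤ :=
  sSup {r : ℤ | ∀ E : V → ℤ, Effective E → degree E = r → G.Winnable (fun w => D w - E w)}

/-- The `k`-th gonality of a graph: the smallest degree of a divisor of rank `k`. -/
noncomputable def gonality (G : Multigraph V) (k : ℤ) : ℤ :=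
  sInf {d : ℤ | ∃ D : V → ℤ, G.rank D = k ∧ degree D = d}

/-- A graph is gonality-tight if its second gonality exceeds its first by exactly 1. -/
def GonalityTight (G : Multigraph V) : Prop :=
  G.gonality 2 = G.gonality 1 + 1

/-- A divisor realises the `k`-th gonality if it has rank `k` and degree `gon_k(G)`. -/
def Realises (G : Multigraph V) (k : ℤ) (D : V → ℤ) : Prop :=
  G.rank D = k ∧ degree D = G.gonality k

/-- A divisor is `v`-reduced: nonnegative away from `v`, and set-firing any nonempty set of
vertices not containing `v` creates a negative coefficient inside the set. -/
def Reduced (G : Multigraph V) (v : V) (D : V → ℤ) : Prop :=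
  (∀ w, w ≠ v → 0 ≤ D w) ∧
    ∀ U : Finset V, U.Nonempty → v ∉ U →
      ∃ w ∈ U, D w - ∑ u ∈ Uᶜ, (G.mult w u : ℤ) < 0

/-- The genus (first Betti number) of a graph: `|E| - |V| + 1`. -/
def genus (G : Multigraph V) : ℤ :=
  ((∑ u, ∑ v, G.mult u v : ℕ) : ℤ) / 2 - Fintype.card V + 1

/-- The canonical divisor of a graph. -/
def canonical (G : Multigraph V) : V → ℤ :=
  fun w => (G.valence w : ℤ) - 2

/-- The subgraph induced on a set `S` of vertices (with all edges among `S`). -/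
def induce (G : Multigraph V) (S : Finset V) : Multigraph {x // x ∈ S} where
  mult a b := G.mult a b
  symm a b := G.symm a b
  loopless a := G.loopless a

/-- `G.SeparatedBy u w v` means every path from `w` to `v` passes through `u`. -/
def SeparatedBy (G : Multigraph V) (u w v : V) : Prop :=
  ¬ Relation.ReflTransGen (fun x y => G.Adj x y ∧ x ≠ u ∧ y ≠ u) w v

end Multigraph

/-- Size of the `i`-th level of a quasi-banana graph: level `0` has a single vertex. -/
def qbSize (q : ℕ → ℕ) (i : ℕ) : ℕ := if i = 0 then 1 else q i

/-- `ℓ` is a quasi-banana labelling of `G` exhibiting `G ≅ QB_m(q_1, …, q_m)`: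
`ℓ` is a bijection onto the pairs `(i, j)` with `i ≤ m`, `1 ≤ j ≤ qbSize q i`
(vertex `u_{i,j}` is the vertex labelled `(i,j)`), and the edge multiplicities are:
one edge between distinct vertices of the same level, `(∑_{k=1}^{i} q_k) + 2` edges
between `u_{i,1}` and each `u_{i+1,j}`, and no other edges. -/
def Multigraph.IsQBLabelling (G : Multigraph V) (m : ℕ) (q : ℕ → ℕ) (ℓ : V → ℕ × ℕ) : Prop :=
  (∀ i, 1 ≤ i → i ≤ m → 0 < q i) ∧
  Function.Injective ℓ ∧
  (∀ v : V, (ℓ v).1 ≤ m ∧ 1 ≤ (ℓ v).2 ∧ (ℓ v).2 ≤ qbSize q (ℓ v).1) ∧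
  (∀ i j : ℕ, i ≤ m → 1 ≤ j → j ≤ qbSize q i → ∃ v, ℓ v = (i, j)) ∧
  (∀ v w : V, v ≠ w → G.mult v w =
    if (ℓ v).1 = (ℓ w).1 then 1
    else if (ℓ v).1 + 1 = (ℓ w).1 ∧ (ℓ v).2 = 1 then (∑ i ∈ Finset.Icc 1 (ℓ v).1, q i) + 2
    else if (ℓ w).1 + 1 = (ℓ v).1 ∧ (ℓ w).2 = 1 then (∑ i ∈ Finset.Icc 1 (ℓ w).1, q i) + 2
    else 0)

/-- A graph is a quasi-banana graph if it is isomorphic to some `QB_m(N)`. -/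
def Multigraph.IsQuasiBanana (G : Multigraph V) : Prop :=
  ∃ (m : ℕ) (q : ℕ → ℕ) (ℓ : V → ℕ × ℕ), G.IsQBLabelling m q ℓ

/-- The graph obtained from `G'` by attaching a complete graph `K_n`: `n` new vertices
pairwise joined by exactly one edge, each joined to `v` by exactly `k+1` edges. -/
def attachComplete (G' : Multigraph V) (v : V) (k n : ℕ) : Multigraph (V ⊕ Fin n) where
  mult x y :=
    match x, y with
    | Sum.inl a, Sum.inl b => G'.mult a b
    | Sum.inl a, Sum.inr _ => if a = v then k + 1 else 0
    | Sum.inr _, Sum.inl b => if b = v then k + 1 else 0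
    | Sum.inr i, Sum.inr j => if i = j then 0 else 1
  symm := by
    rintro (a | i) (b | j)
    · exact G'.symm a b
    · rfl
    · rfl
    · by_cases h : i = j
      · simp [h]
      · simp [h, Ne.symm h]
  loopless := by
    rintro (a | i)
    · exact G'.loopless a
    · simp

namespace Multigraph

theorem sum_lap (G : Multigraph V) (f : V → ℤ) (S : Finset V) :
    ∑ x ∈ S, G.laplacian f x = ∑ x ∈ S, ∑ u ∈ Sᶜ, (G.mult x u : ℤ) * (f x - f u) := by
  have h0 : ∑ x ∈ S, ∑ u ∈ S, (G.mult x u : ℤ) * (f x - f u) = 0 := by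
    have h1 : ∑ x ∈ S, ∑ u ∈ S, (G.mult x u : ℤ) * (f x - f u)
        = ∑ x ∈ S, ∑ u ∈ S, -((G.mult x u : ℤ) * (f x - f u)) := by
      rw [Finset.sum_comm]
      refine Finset.sum_congr rfl fun x _ => Finset.sum_congr rfl fun u _ => ?_
      rw [G.symm u x]; ring
    simp only [Finset.sum_neg_distrib] at h1
    linarith
  have h2 : ∀ x, G.laplacian f x = ∑ u ∈ S, (G.mult x u : ℤ) * (f x - f u)
      + ∑ u ∈ Sᶜ, (G.mult x u : ℤ) * (f x - f u) := fun x =>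
    (Finset.sum_add_sum_compl S _).symm
  simp only [h2, Finset.sum_add_distrib, h0, zero_add]

theorem degree_lap (G : Multigraph V) (f : V → ℤ) : ∑ x, G.laplacian f x = 0 := by
  rw [G.sum_lap f Finset.univ]; simp

theorem lap_add (G : Multigraph V) (f g : V → ℤ) :
    G.laplacian (f + g) = G.laplacian f + G.laplacian g := by
  funext x
  simp only [laplacian, Pi.add_apply, ← Finset.sum_add_distrib]
  exact Finset.sum_congr rfl fun u _ => by ring

theorem lap_neg (G : Multigraph V) (f : V → ℤ) :
    G.laplacian (-f) = -G.laplacian f := by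
  funext x
  simp only [laplacian, Pi.neg_apply, ← Finset.sum_neg_distrib]
  exact Finset.sum_congr rfl fun u _ => by ring

theorem lap_adj (G : Multigraph V) (f g : V → ℤ) :
    ∑ x, f x * G.laplacian g x = ∑ x, g x * G.laplacian f x := by
  simp only [laplacian, Finset.mul_sum]
  have : ∑ x, ∑ u, f x * ((G.mult x u : ℤ) * (g x - g u))
      - ∑ x, ∑ u, g x * ((G.mult x u : ℤ) * (f x - f u)) = 0 := by
    have e : ∀ x u, f x * ((G.mult x u : ℤ) * (g x - g u)) - g x * ((G.mult x u : ℤ) * (f x - f u))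
        = (G.mult x u : ℤ) * (g x * f u) - (G.mult u x : ℤ) * (g u * f x) := by
      intro x u; rw [G.symm u x]; ring
    simp only [← Finset.sum_sub_distrib, e]
    simp only [Finset.sum_sub_distrib]
    rw [Finset.sum_comm (f := fun x u => (G.mult u x : ℤ) * (g u * f x))]
    ring
  linarith

theorem LinEquiv.trans' {G : Multigraph V} {A B C : V → ℤ} (h : G.LinEquiv A B)
    (h' : G.LinEquiv B C) : G.LinEquiv A C := by
  obtain ⟨f, rfl⟩ := h
  obtain ⟨g, rfl⟩ := h'
  exact ⟨f + g, by rw [lap_add]; abel⟩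

theorem LinEquiv.symm' {G : Multigraph V} {A B : V → ℤ} (h : G.LinEquiv A B) :
    G.LinEquiv B A := by
  obtain ⟨f, rfl⟩ := h
  exact ⟨-f, by rw [lap_neg]; abel⟩

theorem LinEquiv.sub' {G : Multigraph V} {A B : V → ℤ} (h : G.LinEquiv A B) (C : V → ℤ) :
    G.LinEquiv (A - C) (B - C) := by
  obtain ⟨f, rfl⟩ := h
  exact ⟨f, by abel⟩

theorem Winnable.equiv {G : Multigraph V} {A B : V → ℤ} (hw : G.Winnable A)
    (h : G.LinEquiv A B) : G.Winnable B := by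
  obtain ⟨E, hE, hA⟩ := hw
  exact ⟨E, hE, h.symm'.trans' hA⟩

theorem Winnable.mono {G : Multigraph V} {A B : V → ℤ} (hw : G.Winnable A)
    (h : ∀ x, A x ≤ B x) : G.Winnable B := by
  obtain ⟨E, hE, f, rfl⟩ := hw
  refine ⟨B - G.laplacian f, fun x => ?_, f, rfl⟩
  have := hE x
  have := h x
  simp only [Pi.sub_apply] at *
  linarith

theorem winnable_of_effective {G : Multigraph V} {A : V → ℤ} (h : Effective A) :
    G.Winnable A := by
  refine ⟨A, h, 0, ?_⟩
  funext x; simp [laplacian]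

/-- A set is legal to fire. -/
def Legal (G : Multigraph V) (D : V → ℤ) (A : Finset V) : Prop :=
  ∀ x ∈ A, ∑ y ∈ Aᶜ, (G.mult x y : ℤ) ≤ D x

theorem Legal.one {G : Multigraph V} {D : V → ℤ} {A : Finset V} (h : G.Legal D A) {x y : V}
    (hx : x ∈ A) (hy : y ∉ A) : (G.mult x y : ℤ) ≤ D x := by
  refine le_trans ?_ (h x hx)
  exact Finset.single_le_sum (f := fun y => (G.mult x y : ℤ)) (fun _ _ => by positivity)
    (Finset.mem_compl.2 hy)

theorem Legal.sub {G : Multigraph V} {D : V → ℤ} {A : Finset V} (h : G.Legal D A) {x : V}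
    (T : Finset V) (hx : x ∈ A) (hT : ∀ y ∈ T, y ∉ A) : ∑ y ∈ T, (G.mult x y : ℤ) ≤ D x := by
  refine le_trans ?_ (h x hx)
  exact Finset.sum_le_sum_of_subset_of_nonneg (fun y hy => Finset.mem_compl.2 (hT y hy))
    (fun _ _ _ => by positivity)

theorem Legal.mono {G : Multigraph V} {D E : V → ℤ} {A : Finset V} (h : G.Legal D A)
    (hDE : ∀ x, D x ≤ E x) : G.Legal E A := fun x hx => (h x hx).trans (hDE x)

theorem Winnable.legal {G : Multigraph V} {D : V → ℤ} (h : G.Winnable D) {w : V} (hw : D w < 0) :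
    ∃ A : Finset V, A.Nonempty ∧ w ∉ A ∧ G.Legal D A := by
  obtain ⟨E, hE, f, rfl⟩ := h
  obtain ⟨z, -, hz⟩ := Finset.exists_max_image (Finset.univ : Finset V) f ⟨w, Finset.mem_univ w⟩
  have hl : G.Legal D (Finset.univ.filter fun x => f x = f z) := by
    intro x hx
    have hxz : f x = f z := by simpa using hx
    have h1 := hE x
    simp only [Pi.sub_apply] at h1
    have h2 : ∑ y ∈ (Finset.univ.filter fun x => f x = f z)ᶜ, (G.mult x y : ℤ)
        ≤ G.laplacian f x := by
      unfold laplacian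
      refine le_trans (Finset.sum_le_sum (g := fun u => (G.mult x u : ℤ) * (f x - f u)) ?_)
        (Finset.sum_le_sum_of_subset_of_nonneg (Finset.subset_univ _) ?_)
      · intro y hy
        have hy' : f y ≠ f z := by simpa using hy
        have hy2 := hz y (Finset.mem_univ y)
        have : 1 ≤ f x - f y := by omega
        have h3 : (0 : ℤ) ≤ G.mult x y := by positivity
        nlinarith
      · intro y _ _
        have hy2 := hz y (Finset.mem_univ y)
        exact mul_nonneg (by positivity) (by omega)
    linarith
  refine ⟨_, ⟨z, by simp⟩, ?_, hl⟩
  intro hwA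
  have := hl w hwA
  have h3 : (0 : ℤ) ≤ ∑ y ∈ (Finset.univ.filter fun x => f x = f z)ᶜ, (G.mult w y : ℤ) :=
    Finset.sum_nonneg fun _ _ => by positivity
  linarith

theorem Reduced.mem {G : Multigraph V} {v : V} {D : V → ℤ} (h : G.Reduced v D) {A : Finset V}
    (hA : A.Nonempty) (hl : G.Legal D A) : v ∈ A := by
  by_contra hv
  obtain ⟨w, hw, h2⟩ := h.2 A hA hv
  have := hl w hw
  linarith

theorem Reduced.nonneg {G : Multigraph V} {v : V} {D : V → ℤ} (h : G.Reduced v D)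
    (hw : G.Winnable D) : 0 ≤ D v := by
  by_contra hv
  obtain ⟨A, hA, hvA, hl⟩ := hw.legal (not_le.1 hv)
  exact hvA (h.mem hA hl)

/-- changing the value at the base vertex keeps reducedness -/
theorem Reduced.change {G : Multigraph V} {v : V} {D E : V → ℤ} (h : G.Reduced v D)
    (hE : ∀ x, x ≠ v → E x = D x) : G.Reduced v E := by
  refine ⟨fun w hw => by rw [hE w hw]; exact h.1 w hw, fun U hU hv => ?_⟩
  obtain ⟨w, hw, h2⟩ := h.2 U hU hv
  exact ⟨w, hw, by rw [hE w (fun e => hv (e ▸ hw))]; exact h2⟩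

theorem exists_potential (G : Multigraph V) (v : V) (d : V → ℕ)
    (hd : ∀ x, x ≠ v → ∃ u, 0 < G.mult x u ∧ d u < d x) :
    ∃ φ : V → ℤ, (∀ x, 0 ≤ φ x) ∧ ∀ x, x ≠ v → 0 < G.laplacian φ x := by
  obtain ⟨n, hn⟩ : ∃ n, ∀ x, d x ≤ n :=
    ⟨∑ x, d x, fun x => Finset.single_le_sum (fun _ _ => Nat.zero_le _) (Finset.mem_univ x)⟩
  obtain ⟨B, hB1, hB⟩ : ∃ B : ℤ, 1 ≤ B ∧ ∀ x, ∑ u, (G.mult x u : ℤ) < B := by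
    refine ⟨∑ x, ∑ u, (G.mult x u : ℤ) + 1, ?_, fun x => ?_⟩
    · have : (0 : ℤ) ≤ ∑ x, ∑ u, (G.mult x u : ℤ) :=
        Finset.sum_nonneg fun _ _ => Finset.sum_nonneg fun _ _ => by positivity
      linarith
    · have : ∑ u, (G.mult x u : ℤ) ≤ ∑ x, ∑ u, (G.mult x u : ℤ) :=
        Finset.single_le_sum (f := fun x => ∑ u, (G.mult x u : ℤ))
          (fun _ _ => Finset.sum_nonneg fun _ _ => by positivity) (Finset.mem_univ x)
      linarith
  refine ⟨fun x => B ^ n - B ^ (n - d x), fun x => ?_, fun x hx => ?_⟩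
  · have : B ^ (n - d x) ≤ B ^ n := pow_le_pow_right₀ hB1 (by omega)
    simp only; linarith
  · obtain ⟨u, hu, hdu⟩ := hd x hx
    have e : G.laplacian (fun x => B ^ n - B ^ (n - d x)) x
        = ∑ y, (G.mult x y : ℤ) * B ^ (n - d y) - (∑ y, (G.mult x y : ℤ)) * B ^ (n - d x) := by
      simp only [laplacian, Finset.sum_mul, ← Finset.sum_sub_distrib]
      exact Finset.sum_congr rfl fun _ _ => by ring
    have hpos : 0 < B ^ (n - d x) := by positivity
    have h1 : (G.mult x u : ℤ) * B ^ (n - d u) ≤ ∑ y, (G.mult x y : ℤ) * B ^ (n - d y) :=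
      Finset.single_le_sum (f := fun y => (G.mult x y : ℤ) * B ^ (n - d y))
        (fun _ _ => by positivity) (Finset.mem_univ u)
    have h2 : B * B ^ (n - d x) ≤ B ^ (n - d u) := by
      rw [← pow_succ']
      have := hn x
      exact pow_le_pow_right₀ hB1 (by omega)
    have h3 : (1 : ℤ) ≤ G.mult x u := by exact_mod_cast hu
    have h4 : (0 : ℤ) < B ^ (n - d u) := by positivity
    rw [e]
    nlinarith [hB x]

theorem exists_reduced (G : Multigraph V) (v : V) (d : V → ℕ)
    (hd : ∀ x, x ≠ v → ∃ u, 0 < G.mult x u ∧ d u < d x) (D : V → ℤ) (hD : Effective D) :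
    ∃ E, Effective E ∧ G.LinEquiv D E ∧ G.Reduced v E := by
  classical
  obtain ⟨φ, hφ, hL⟩ := G.exists_potential v d hd
  have hex : ∃ k : ℕ, ∃ E, Effective E ∧ G.LinEquiv D E ∧ ∑ x, φ x * E x = k := by
    have h0 : 0 ≤ ∑ x, φ x * D x := Finset.sum_nonneg fun x _ => mul_nonneg (hφ x) (hD x)
    refine ⟨(∑ x, φ x * D x).toNat, D, hD, ⟨0, by funext x; simp [laplacian]⟩, ?_⟩
    rw [Int.toNat_of_nonneg h0]
  obtain ⟨E, hE, hDE, hk⟩ := Nat.find_spec hex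
  refine ⟨E, hE, hDE, fun w _ => hE w, fun U hU hv => ?_⟩
  by_contra hcon
  push Not at hcon
  set g : V → ℤ := fun x => if x ∈ U then 1 else 0 with hg
  have hE' : Effective (E - G.laplacian g) := by
    intro x
    simp only [Pi.sub_apply]
    by_cases hx : x ∈ U
    · have h1 := hcon x hx
      have : G.laplacian g x = ∑ u ∈ Uᶜ, (G.mult x u : ℤ) := by
        simp only [laplacian, ← Finset.sum_add_sum_compl U]
        rw [Finset.sum_eq_zero, zero_add]
        · refine Finset.sum_congr rfl fun u hu => ?_
          have hu' : u ∉ U := by simpa using hu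
          simp [hg, hx, hu']
        · intro u hu
          simp [hg, hx, hu]
      linarith
    · have : G.laplacian g x ≤ 0 := by
        refine Finset.sum_nonpos fun u _ => ?_
        by_cases hu : u ∈ U <;> simp [hg, hx, hu]
      have := hE x
      linarith
  have hlt : ∑ x, φ x * (E - G.laplacian g) x < ∑ x, φ x * E x := by
    simp only [Pi.sub_apply, mul_sub, Finset.sum_sub_distrib, lap_adj]
    have : ∑ x, g x * G.laplacian φ x = ∑ x ∈ U, G.laplacian φ x := by
      simp [hg, ite_mul, Finset.sum_ite_mem]
    rw [this]
    have : 0 < ∑ x ∈ U, G.laplacian φ x :=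
      Finset.sum_pos (fun x hx => hL x fun e => hv (e ▸ hx)) hU
    linarith
  have h0 : 0 ≤ ∑ x, φ x * (E - G.laplacian g) x :=
    Finset.sum_nonneg fun x _ => mul_nonneg (hφ x) (hE' x)
  have := Nat.find_min hex (m := (∑ x, φ x * (E - G.laplacian g) x).toNat) (by
    zify; rw [Int.toNat_of_nonneg h0, ← hk]; exact hlt)
  exact this ⟨_, hE', hDE.trans' ⟨g, rfl⟩, by rw [Int.toNat_of_nonneg h0]⟩

/-- Membership of `2` in the rank set. -/
theorem rank_two {G : Multigraph V} {D : V → ℤ} (h : G.rank D = 2) (x y : V) :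
    G.Winnable (D - Pi.single x 1 - Pi.single y 1) := by
  unfold rank at h
  set S := {r : ℤ | ∀ E : V → ℤ, Effective E → degree E = r →
    G.Winnable (fun w => D w - E w)} with hS
  have hb : BddAbove S := by
    by_contra hb
    rw [Int.csSup_of_not_bddAbove hb] at h
    norm_num at h
  have hne : S.Nonempty := ⟨-1, fun E hE hd => by
    have : 0 ≤ degree E := Finset.sum_nonneg fun x _ => hE x
    omega⟩
  have hm := Int.csSup_mem hne hb
  rw [h] at hm
  have := hm (Pi.single x 1 + Pi.single y 1) (fun w => by
    simp only [Pi.add_apply, Pi.single_apply]; split_ifs <;> norm_num) (by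
    simp [degree, Finset.sum_add_distrib])
  refine this.mono fun w => ?_
  simp only [Pi.add_apply, Pi.sub_apply]; linarith

end Multigraph

open Multigraph

/-- `k_i`. -/
def qbK (q : ℕ → ℕ) (i : ℕ) : ℕ := (∑ k ∈ Finset.Icc 1 i, q k) + 1

theorem qbK_succ (q : ℕ → ℕ) (i : ℕ) : qbK q (i + 1) = qbK q i + q (i + 1) := by
  unfold qbK
  rw [Finset.sum_Icc_succ_top (by omega)]; ring

theorem qbK_pos (q : ℕ → ℕ) (i : ℕ) : 1 ≤ qbK q i := by unfold qbK; omega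

/-- A labelling along with a choice of first vertices. -/
structure QBD (G : Multigraph V) (m : ℕ) (q : ℕ → ℕ) (ℓ : V → ℕ × ℕ) (p : ℕ → V) : Prop where
  lab : G.IsQBLabelling m q ℓ
  hp : ∀ i, i ≤ m → ℓ (p i) = (i, 1)

namespace QBD

variable {G : Multigraph V} {m : ℕ} {q : ℕ → ℕ} {ℓ : V → ℕ × ℕ} {p : ℕ → V}

theorem lp (h : QBD G m q ℓ p) {i : ℕ} (hi : i ≤ m) : (ℓ (p i)).1 = i := by rw [h.hp i hi]

theorem le_m (h : QBD G m q ℓ p) (x : V) : (ℓ x).1 ≤ m := (h.lab.2.2.1 x).1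

theorem eq_p (h : QBD G m q ℓ p) {x : V} (hx : (ℓ x).2 = 1) : x = p (ℓ x).1 := by
  apply h.lab.2.1
  rw [h.hp _ (h.le_m x)]
  exact Prod.ext rfl hx

theorem eq_p0 (h : QBD G m q ℓ p) {x : V} (hx : (ℓ x).1 = 0) : x = p 0 := by
  have h1 := h.lab.2.2.1 x
  rw [hx] at h1
  have h2 : (ℓ x).2 = 1 := by
    have := h1.2.1
    have h3 := h1.2.2
    simp [qbSize] at h3
    omega
  have := h.eq_p h2
  rwa [hx] at this

theorem mult_same (h : QBD G m q ℓ p) {x y : V} (hxy : x ≠ y) (hl : (ℓ x).1 = (ℓ y).1) :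
    G.mult x y = 1 := by
  rw [h.lab.2.2.2.2 x y hxy, if_pos hl]

theorem mult_up (h : QBD G m q ℓ p) {i : ℕ} (hi : i ≤ m) {y : V} (hl : (ℓ y).1 = i + 1) :
    G.mult (p i) y = qbK q i + 1 := by
  have hpi := h.hp i hi
  have hne : p i ≠ y := by
    rintro rfl
    rw [hpi] at hl
    simp at hl
  rw [h.lab.2.2.2.2 _ y hne, hpi, if_neg (by simp [hl]), if_pos (by simp [hl])]
  rfl

theorem mult_down (h : QBD G m q ℓ p) {i : ℕ} (hi : i ≤ m) {y : V} (hl : (ℓ y).1 = i + 1) :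
    G.mult y (p i) = qbK q i + 1 := by rw [G.symm, h.mult_up hi hl]

theorem mult_zero (h : QBD G m q ℓ p) {i : ℕ} {x y : V} (hx : (ℓ x).1 ≤ i)
    (hy : i < (ℓ y).1) (hxp : x ≠ p i) : G.mult x y = 0 := by
  have hne : x ≠ y := by rintro rfl; omega
  rw [h.lab.2.2.2.2 x y hne, if_neg (by omega), if_neg, if_neg (by omega)]
  rintro ⟨h1, h2⟩
  apply hxp
  have := h.eq_p h2
  rwa [show (ℓ x).1 = i by omega] at this

theorem card_level (h : QBD G m q ℓ p) {i : ℕ} (h1 : 1 ≤ i) (hi : i ≤ m) :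
    (Finset.univ.filter fun x => (ℓ x).1 = i).card = q i := by
  have : (Finset.univ.filter fun x => (ℓ x).1 = i).card = (Finset.Icc 1 (q i)).card := by
    refine Finset.card_bij (fun x _ => (ℓ x).2) ?_ ?_ ?_
    · intro x hx
      have hx' : (ℓ x).1 = i := by simpa using hx
      have h3 := h.lab.2.2.1 x
      rw [hx', qbSize, if_neg (by omega)] at h3
      simp [h3.2.1, h3.2.2]
    · intro x hx y hy hxy
      have hx' : (ℓ x).1 = i := by simpa using hx
      have hy' : (ℓ y).1 = i := by simpa using hy
      exact h.lab.2.1 (Prod.ext (hx'.trans hy'.symm) hxy)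
    · intro j hj
      have hj' := Finset.mem_Icc.1 hj
      obtain ⟨x, hx⟩ := h.lab.2.2.2.1 i j hi hj'.1 (by rw [qbSize, if_neg (by omega)]; exact hj'.2)
      exact ⟨x, by simp [hx], by simp [hx]⟩
  rw [this]; simp

/-- Burning downwards. -/
theorem burn_down (h : QBD G m q ℓ p) {D : V → ℤ} {A : Finset V} (hl : G.Legal D A) :
    ∀ i, i ≤ m → p i ∉ A → (∀ x, (ℓ x).1 ≤ i → x ≠ p i → D x ≤ 0) →
      ∀ x, (ℓ x).1 ≤ i → x ∉ A := by
  intro i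
  induction i with
  | zero =>
    intro _ hp0 _ x hx
    rw [h.eq_p0 (Nat.le_zero.1 hx)]; exact hp0
  | succ i ih =>
    intro hi hpi hD x hx
    by_cases hxl : (ℓ x).1 = i + 1
    · intro hxA
      have hne : x ≠ p (i + 1) := fun e => hpi (e ▸ hxA)
      have h1 := hl.one hxA hpi
      rw [h.mult_same hne (by rw [hxl, h.lp hi])] at h1
      have := hD x hx hne
      norm_num at h1
      linarith
    · have hlp : (ℓ (p i)).1 = i := h.lp (by omega)
      refine ih (by omega) ?_ ?_ x (by omega)
      · intro hA
        have h1 := hl.one hA hpi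
        rw [h.mult_up (by omega) (h.lp hi)] at h1
        have h2 := hD (p i) (by omega) (fun e => by
          have := h.lp hi
          rw [← e] at this; omega)
        have : (0 : ℤ) ≤ (qbK q i : ℤ) := by positivity
        push_cast at h1
        linarith
      · intro y hy _
        exact hD y (by omega) (fun e => by
          have := h.lp hi
          rw [← e] at this; omega)

theorem exists_red (h : QBD G m q ℓ p) {i : ℕ} (hi : i ≤ m) (D : V → ℤ) (hD : Effective D) :
    ∃ E, Effective E ∧ G.LinEquiv D E ∧ G.Reduced (p i) E := by
  refine G.exists_reduced (p i)
    (fun x => if i < (ℓ x).1 then (ℓ x).1 - i else i - (ℓ x).1 + if (ℓ x).2 = 1 then 0 else 1)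
    ?_ D hD
  intro x hx
  have hxm := h.le_m x
  by_cases hix : i < (ℓ x).1
  · refine ⟨p ((ℓ x).1 - 1), ?_, ?_⟩
    · rw [h.mult_down (by omega) (by omega)]; omega
    · rw [h.hp _ (by omega)]
      simp only [if_pos hix]
      split_ifs <;> omega
  · by_cases hx1 : (ℓ x).2 = 1
    · have hxp := h.eq_p hx1
      have hlt : (ℓ x).1 ≠ i := fun e => hx (by rw [← e]; exact hxp)
      refine ⟨p ((ℓ x).1 + 1), ?_, ?_⟩
      · have := h.mult_up (i := (ℓ x).1) (by omega) (h.lp (i := (ℓ x).1 + 1) (by omega))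
        rw [← hxp] at this
        rw [this]; omega
      · rw [h.hp _ (by omega)]
        simp only [if_neg hix, if_pos hx1]
        split_ifs <;> omega
    · refine ⟨p (ℓ x).1, ?_, ?_⟩
      · rw [h.mult_same (fun e => hx1 (by rw [e, h.hp _ (h.le_m x)])) (by rw [h.lp (h.le_m x)])]
        omega
      · rw [h.hp _ (by omega)]
        simp [if_neg hix, if_neg hx1]

/-- the maximum on the upper part is at `p i` -/
theorem upper_le (h : QBD G m q ℓ p) {i : ℕ} {D f : V → ℤ} {r : V}
    (hr : (ℓ r).1 ≤ i) (hred : G.Reduced r D)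
    (hE : ∀ x, i < (ℓ x).1 → 0 ≤ (D - G.laplacian f) x) :
    ∀ x, i < (ℓ x).1 → f x ≤ f (p i) := by
  intro x hx
  by_contra hcon
  obtain ⟨z, hz, hmax⟩ := Finset.exists_max_image
    (Finset.univ.filter fun x => i < (ℓ x).1) f ⟨x, by simpa using hx⟩
  have hz' : i < (ℓ z).1 := by simpa using hz
  have hzx : f x ≤ f z := hmax x (by simpa using hx)
  have hmax' : ∀ y, i < (ℓ y).1 → f y ≤ f z := fun y hy => hmax y (by simpa using hy)
  set A : Finset V := Finset.univ.filter fun y => i < (ℓ y).1 ∧ f y = f z with hA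
  have hl : G.Legal D A := by
    intro y hy
    have hy' : i < (ℓ y).1 ∧ f y = f z := by simpa [hA] using hy
    have h1 := hE y hy'.1
    simp only [Pi.sub_apply] at h1
    have key : ∀ u, (u ∉ A → (G.mult y u : ℤ) ≤ (G.mult y u : ℤ) * (f y - f u)) ∧
        0 ≤ (G.mult y u : ℤ) * (f y - f u) := by
      intro u
      have h3 : (0 : ℤ) ≤ G.mult y u := by positivity
      by_cases hu : i < (ℓ u).1
      · have h4 := hmax' u hu
        refine ⟨fun huA => ?_, mul_nonneg h3 (by omega)⟩
        have : f u ≠ f z := fun e => huA (by simp [hA, hu, e])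
        have : 1 ≤ f y - f u := by omega
        nlinarith
      · by_cases hup : u = p i
        · have : 1 ≤ f y - f u := by rw [hup]; omega
          exact ⟨fun _ => by nlinarith, by nlinarith⟩
        · rw [G.symm, h.mult_zero (i := i) (by omega) hy'.1 hup]
          simp
    have h2 : ∑ u ∈ Aᶜ, (G.mult y u : ℤ) ≤ G.laplacian f y := by
      unfold laplacian
      refine le_trans (Finset.sum_le_sum (g := fun u => (G.mult y u : ℤ) * (f y - f u)) ?_)
        (Finset.sum_le_sum_of_subset_of_nonneg (Finset.subset_univ _) ?_)
      · intro u hu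
        exact (key u).1 (by simpa using hu)
      · intro u _ _
        exact (key u).2
    linarith
  have hrA := hred.mem (A := A) ⟨z, by simp [hA, hz']⟩ hl
  have : i < (ℓ r).1 ∧ f r = f z := by simpa [hA] using hrA
  omega

theorem lower_sum_eq (h : QBD G m q ℓ p) {i : ℕ} {D E : V → ℤ} {r s : V}
    (hr : (ℓ r).1 ≤ i) (hs : (ℓ s).1 ≤ i) (hD : G.Reduced r D) (hE : G.Reduced s E)
    (hDE : G.LinEquiv D E) :
    ∑ x ∈ Finset.univ.filter (fun x => (ℓ x).1 ≤ i), E x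
      = ∑ x ∈ Finset.univ.filter (fun x => (ℓ x).1 ≤ i), D x := by
  obtain ⟨f, rfl⟩ := hDE
  have h1 := h.upper_le hr hD (f := f) (fun x hx => hE.1 x (by rintro rfl; omega))
  have h2 := h.upper_le hs hE (f := -f) (fun x hx => by
    have := hD.1 x (by rintro rfl; omega)
    rw [lap_neg]; simpa using this)
  simp only [Pi.sub_apply, Finset.sum_sub_distrib]
  rw [G.sum_lap, sub_eq_self]
  refine Finset.sum_eq_zero fun x hx => ?_
  refine Finset.sum_eq_zero fun u hu => ?_
  have hx' : (ℓ x).1 ≤ i := by simpa using hx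
  have hu' : i < (ℓ u).1 := by simpa using hu
  by_cases hxp : x = p i
  · have a := h1 u hu'
    have b := h2 u hu'
    simp only [Pi.neg_apply] at b
    rw [hxp, show f (p i) = f u by omega]; simp
  · rw [h.mult_zero hx' hu' hxp]; simp

/-- Counting: firing a set containing `p i` but not all of level `i+1`. -/
theorem count (h : QBD G m q ℓ p) {i : ℕ} (hi : i + 1 ≤ m) {D : V → ℤ} {A : Finset V}
    (hl : G.Legal D A) (hpA : p i ∈ A) {u : V} (hu : (ℓ u).1 = i + 1) (huA : u ∉ A) :
    ∃ t : ℕ, 1 ≤ t ∧ t ≤ q (i + 1) ∧ (t : ℤ) * (qbK q i + 1) ≤ D (p i) ∧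
      (∀ x ∈ A, (ℓ x).1 = i + 1 → (t : ℤ) ≤ D x) ∧
      (Finset.univ.filter fun x => (ℓ x).1 = i + 1 ∧ x ∉ A).card = t ∧
      (Finset.univ.filter fun x => (ℓ x).1 = i + 1 ∧ x ∈ A).card + t = q (i + 1) := by
  set T := Finset.univ.filter fun x => (ℓ x).1 = i + 1 ∧ x ∉ A with hT
  have hcard : (Finset.univ.filter fun x => (ℓ x).1 = i + 1 ∧ x ∈ A).card + T.card
      = q (i + 1) := by
    rw [← h.card_level (by omega) hi, ← Finset.card_filter_add_card_filter_not
      (s := Finset.univ.filter fun x => (ℓ x).1 = i + 1) (fun x => x ∈ A),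
      Finset.filter_filter, Finset.filter_filter]
  have hTA : ∀ y ∈ T, y ∉ A := fun y hy => by
    have : (ℓ y).1 = i + 1 ∧ y ∉ A := by simpa [hT] using hy
    exact this.2
  have hTl : ∀ y ∈ T, (ℓ y).1 = i + 1 := fun y hy => by
    have : (ℓ y).1 = i + 1 ∧ y ∉ A := by simpa [hT] using hy
    exact this.1
  refine ⟨T.card, Finset.card_pos.2 ⟨u, by simp [hT, hu, huA]⟩, by omega, ?_, ?_, rfl, hcard⟩
  · have := hl.sub T hpA hTA
    rw [Finset.sum_congr rfl (g := fun _ => ((qbK q i : ℤ) + 1)) (fun y hy => by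
      rw [h.mult_up (by omega) (hTl y hy)]; push_cast; ring)] at this
    simpa using this
  · intro x hx hxl
    have := hl.sub T hx hTA
    rw [Finset.sum_congr rfl (g := fun _ => (1 : ℤ)) (fun y hy => by
      have hne : x ≠ y := fun e => hTA y hy (e ▸ hx)
      rw [h.mult_same hne (by rw [hxl, hTl y hy])]; simp)] at this
    simpa using this

theorem lower_split (ℓ : V → ℕ × ℕ) (i : ℕ) (D : V → ℤ) :
    ∑ x ∈ Finset.univ.filter (fun x => (ℓ x).1 ≤ i + 1), D x
      = ∑ x ∈ Finset.univ.filter (fun x => (ℓ x).1 ≤ i), D x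
        + ∑ x ∈ Finset.univ.filter (fun x => (ℓ x).1 = i + 1), D x := by
  rw [← Finset.sum_union]
  · congr 1
    ext x; simp; omega
  · rw [Finset.disjoint_filter]; intro x _ h1; omega

/-- Lower bound on the first gonality, level by level. -/
theorem gon_one (h : QBD G m q ℓ p) : ∀ i, i ≤ m → ∀ D : V → ℤ, G.Reduced (p i) D →
    (∀ w, G.Winnable (D - Pi.single w 1)) →
    (qbK q i : ℤ) ≤ ∑ x ∈ Finset.univ.filter (fun x => (ℓ x).1 ≤ i), D x := by
  intro i
  induction i with
  | zero =>
    intro _ D hD hw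
    have h1 : 0 ≤ (D - Pi.single (p 0) 1 : V → ℤ) (p 0) := by
      refine (hD.change (E := D - Pi.single (p 0) 1) fun x hx => ?_).nonneg (hw _)
      simp [hx]
    have : (Finset.univ.filter fun x => (ℓ x).1 ≤ 0) = {p 0} := by
      ext x
      simp only [Finset.mem_filter, Finset.mem_univ, true_and, Finset.mem_singleton]
      constructor
      · intro hx; exact h.eq_p0 (by omega)
      · rintro rfl; rw [h.lp (by omega)]
    rw [this]
    simp at h1
    simp [qbK]; linarith
  | succ i ih =>
    intro hi D hD hw
    have h1 : 0 ≤ (D - Pi.single (p (i+1)) 1 : V → ℤ) (p (i+1)) := by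
      refine (hD.change (E := D - Pi.single (p (i+1)) 1) fun x hx => ?_).nonneg (hw _)
      simp [hx]
    have hDe : Effective D := by
      intro x
      by_cases hx : x = p (i + 1)
      · subst hx
        simp at h1
        linarith
      · exact hD.1 x hx
    obtain ⟨E, hE, hDE, hEr⟩ := h.exists_red (i := i) (by omega) D hDe
    have hwE : ∀ w, G.Winnable (E - Pi.single w 1) := fun w => (hw w).equiv (hDE.sub' _)
    rw [← h.lower_sum_eq (by rw [h.lp hi]) (by rw [h.lp (by omega)]; omega) hD hEr hDE]
    rw [lower_split, qbK_succ]
    by_cases hz : ∃ u, (ℓ u).1 = i + 1 ∧ E u = 0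
    · obtain ⟨u, hu, hu0⟩ := hz
      obtain ⟨A, hAne, huA, hl⟩ := (hwE u).legal (w := u) (by simp [hu0])
      have hl' : G.Legal E A := hl.mono fun x => by
        simp only [Pi.sub_apply, Pi.single_apply]; split_ifs <;> linarith
      have hpA := hEr.mem hAne hl'
      obtain ⟨t, ht1, htq, hv, hx, -, hc⟩ := h.count hi hl' hpA hu huA
      have s1 : E (p i) ≤ ∑ x ∈ Finset.univ.filter (fun x => (ℓ x).1 ≤ i), E x :=
        Finset.single_le_sum (fun x _ => hE x) (by simp [h.lp (show i ≤ m by omega)])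
      have s2 : ((Finset.univ.filter fun x => (ℓ x).1 = i + 1 ∧ x ∈ A).card : ℤ) * t ≤
          ∑ x ∈ Finset.univ.filter (fun x => (ℓ x).1 = i + 1), E x := by
        refine le_trans ?_ (Finset.sum_le_sum_of_subset_of_nonneg
          (s := Finset.univ.filter fun x => (ℓ x).1 = i + 1 ∧ x ∈ A) ?_ fun x _ _ => hE x)
        · rw [← nsmul_eq_mul]
          refine Finset.card_nsmul_le_sum _ _ _ fun x hx' => ?_
          have : (ℓ x).1 = i + 1 ∧ x ∈ A := by simpa using hx'
          exact hx x this.2 this.1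
        · intro x; simp; tauto
      have hK := qbK_pos q i
      generalize (Finset.univ.filter fun x => (ℓ x).1 = i + 1 ∧ x ∈ A).card = c at hc s2
      zify at ht1 htq hc hK
      push_cast
      rw [show (c : ℤ) = q (i + 1) - t by linarith] at s2
      nlinarith [mul_nonneg (sub_nonneg.2 ht1)
        (show (0 : ℤ) ≤ qbK q i + q (i + 1) - t by linarith)]
    · push Not at hz
      have h3 := ih (by omega) E hEr hwE
      have s2 : (q (i + 1) : ℤ) ≤ ∑ x ∈ Finset.univ.filter (fun x => (ℓ x).1 = i + 1), E x := by
        have := Finset.card_nsmul_le_sum (Finset.univ.filter fun x => (ℓ x).1 = i + 1) E 1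
          (fun x hx => by
            have hx' : (ℓ x).1 = i + 1 := by simpa using hx
            have := hE x
            have := hz x hx'
            omega)
        rw [h.card_level (by omega) hi] at this
        simpa using this
      push_cast; linarith

/-- The divisor `F_{i+1}`. -/
def F (q : ℕ → ℕ) (ℓ : V → ℕ × ℕ) (p : ℕ → V) (i : ℕ) : V → ℤ :=
  fun w => if w = p i then (qbK q i : ℤ) + 1 else if (ℓ w).1 = i + 1 then 1 else 0

theorem sum_level (h : QBD G m q ℓ p) {i : ℕ} (h1 : 1 ≤ i) (hi : i ≤ m) :
    ∑ x : V, (if (ℓ x).1 = i then (1 : ℤ) else 0) = q i := by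
  rw [← h.card_level h1 hi]; simp

theorem F_eq (h : QBD G m q ℓ p) {i : ℕ} (hi : i ≤ m) :
    F q ℓ p i = fun w => (Pi.single (p i) ((qbK q i : ℤ) + 1) : V → ℤ) w
      + if (ℓ w).1 = i + 1 then 1 else 0 := by
  funext w
  simp only [F, Pi.single_apply]
  by_cases hw : w = p i
  · have : (ℓ w).1 ≠ i + 1 := by rw [hw, h.lp hi]; omega
    simp [hw, hw ▸ this]
  · simp [hw]

theorem degree_F (h : QBD G m q ℓ p) {i : ℕ} (hi : i + 1 ≤ m) :
    ∑ x, F q ℓ p i x = (qbK q (i + 1) : ℤ) + 1 := by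
  rw [h.F_eq (by omega), Finset.sum_add_distrib, h.sum_level (by omega) hi, qbK_succ]
  simp; ring

theorem F_equiv (h : QBD G m q ℓ p) {i : ℕ} (hi : i + 1 ≤ m) {u : V} (hu : (ℓ u).1 = i + 1) :
    G.LinEquiv (F q ℓ p i) (Pi.single u ((qbK q (i + 1) : ℤ) + 1)) := by
  classical
  set B : V → Prop := fun w => w = u ∨ (u = p (i + 1) ∧ i + 1 < (ℓ w).1) with hB
  set f : V → ℤ := fun w => if B w then -1 else 0 with hf
  have hBu : B u := Or.inl rfl
  have hoff : ∀ w, w ≠ u → (F q ℓ p i - G.laplacian f) w = 0 := by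
    intro w hw
    simp only [Pi.sub_apply]
    by_cases hBw : B w
    · obtain ⟨hup, hlw⟩ : u = p (i + 1) ∧ i + 1 < (ℓ w).1 := hBw.resolve_left hw
      have h1 : G.laplacian f w = 0 := by
        refine Finset.sum_eq_zero fun x _ => ?_
        by_cases hBx : B x
        · simp [hf, hBw, hBx]
        · have hx1 : x ≠ u := fun e => hBx (Or.inl e)
          have hx2 : ¬ i + 1 < (ℓ x).1 := fun e => hBx (Or.inr ⟨hup, e⟩)
          rw [G.symm, h.mult_zero (i := i + 1) (by omega) hlw (hup ▸ hx1)]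
          simp
      have hwp : w ≠ p i := by
        rintro rfl
        rw [h.lp (by omega)] at hlw; omega
      rw [h1, F, if_neg hwp, if_neg (by omega)]; simp
    · have h1 : G.laplacian f w = G.mult w u := by
        unfold laplacian
        rw [Finset.sum_eq_single u]
        · simp [hf, hBw, hBu]
        · intro x _ hxu
          by_cases hBx : B x
          · obtain ⟨hup, hlx⟩ : u = p (i + 1) ∧ i + 1 < (ℓ x).1 := hBx.resolve_left hxu
            have hlw : ¬ i + 1 < (ℓ w).1 := fun e => hBw (Or.inr ⟨hup, e⟩)
            rw [h.mult_zero (i := i + 1) (by omega) hlx (hup ▸ hw)]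
            simp
          · simp [hf, hBw, hBx]
        · simp
      rw [h1, F]
      by_cases hwp : w = p i
      · rw [if_pos hwp, hwp, h.mult_up (by omega) hu]; push_cast; ring
      · rw [if_neg hwp]
        by_cases hwl : (ℓ w).1 = i + 1
        · rw [if_pos hwl, h.mult_same hw (by omega)]; simp
        · rw [if_neg hwl]
          rcases lt_or_gt_of_ne hwl with hlt | hgt
          · rw [h.mult_zero (i := i) (by omega) (by omega) hwp]; simp
          · have hup : u ≠ p (i + 1) := fun e => hBw (Or.inr ⟨e, hgt⟩)
            rw [G.symm, h.mult_zero (i := i + 1) (by omega) hgt hup]; simp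
  refine ⟨f, ?_⟩
  have hsum : ∑ x, (F q ℓ p i - G.laplacian f) x = (qbK q (i + 1) : ℤ) + 1 := by
    simp only [Pi.sub_apply, Finset.sum_sub_distrib, degree_lap, h.degree_F hi, sub_zero]
  rw [Finset.sum_eq_single u (fun w _ hw => hoff w hw) (by simp)] at hsum
  funext w
  by_cases hw : w = u
  · rw [hw, hsum]; simp
  · rw [hoff w hw]; simp [hw]

/-- the pushed down divisor has rank two on lower levels, induction step -/
theorem win_F (h : QBD G m q ℓ p) {i : ℕ} (hi : i + 1 ≤ m)
    (ih : ∀ x y, (ℓ x).1 ≤ i → (ℓ y).1 ≤ i →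
      G.Winnable (Pi.single (p i) ((qbK q i : ℤ) + 1) - Pi.single x 1 - Pi.single y 1))
    (x y : V) (hx : (ℓ x).1 ≤ i + 1) (hy : (ℓ y).1 ≤ i + 1) :
    G.Winnable (F q ℓ p i - Pi.single x 1 - Pi.single y 1) := by
  wlog hxy : (ℓ y).1 ≤ (ℓ x).1 generalizing x y
  · have := this y x hy hx (by omega)
    rwa [sub_right_comm] at this
  have hFT : ∀ w, (Pi.single (p i) ((qbK q i : ℤ) + 1) : V → ℤ) w ≤ F q ℓ p i w := by
    intro w
    rw [h.F_eq (by omega)]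
    simp only
    split_ifs <;> linarith
  have hF1 : ∀ w, (ℓ w).1 = i + 1 → F q ℓ p i w = 1 := by
    intro w hw
    rw [F, if_neg, if_pos hw]
    rintro rfl
    rw [h.lp (by omega)] at hw; omega
  have hF0 : ∀ w, 0 ≤ F q ℓ p i w := by
    intro w; unfold F; split_ifs <;> positivity
  by_cases hx1 : (ℓ x).1 = i + 1
  · by_cases hy1 : (ℓ y).1 = i + 1
    · by_cases hxye : x = y
      · subst hxye
        refine Winnable.equiv (winnable_of_effective ?_)
          (((h.F_equiv hi hx1).symm'.sub' (Pi.single x 1)).sub' (Pi.single x 1))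
        intro w
        have := qbK_pos q (i + 1)
        by_cases hw : w = x
        · subst hw; simp; omega
        · simp [hw]
      · refine winnable_of_effective fun w => ?_
        have := hF0 w
        by_cases hwx : w = x
        · subst hwx
          simp [hxye, hF1 w hx1]
        · by_cases hwy : w = y
          · subst hwy
            simp [hwx, hF1 w hy1]
          · simp [hwx, hwy, this]
    · refine (ih (p i) y (by rw [h.lp (by omega)]) (by omega)).mono fun w => ?_
      have h1 := hFT w
      have h2 := hF0 w
      simp only [Pi.sub_apply]
      have hpx : p i ≠ x := by
        rintro rfl
        rw [h.lp (by omega)] at hx1; omega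
      by_cases hwx : w = x
      · subst hwx
        have hwy : w ≠ y := by rintro rfl; exact hy1 hx1
        simp [hF1 w hx1, hwy, hpx.symm]
      · have h3 : (0 : ℤ) ≤ (Pi.single (p i) 1 : V → ℤ) w := by
          simp only [Pi.single_apply]; split_ifs <;> norm_num
        simp only [Pi.single_eq_of_ne hwx]
        linarith
  · refine (ih x y (by omega) (by omega)).mono fun w => ?_
    have h1 := hFT w
    simp only [Pi.sub_apply]
    linarith

theorem win_T (h : QBD G m q ℓ p) : ∀ i, i ≤ m → ∀ x y, (ℓ x).1 ≤ i → (ℓ y).1 ≤ i →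
      G.Winnable (Pi.single (p i) ((qbK q i : ℤ) + 1) - Pi.single x 1 - Pi.single y 1) := by
  intro i
  induction i with
  | zero =>
    intro _ x y hx hy
    rw [h.eq_p0 (Nat.le_zero.1 hx), h.eq_p0 (Nat.le_zero.1 hy)]
    refine winnable_of_effective fun w => ?_
    by_cases hw : w = p 0
    · subst hw; simp [qbK]
    · simp [hw]
  | succ i ih =>
    intro hi x y hx hy
    exact (h.win_F hi (ih (by omega)) x y hx hy).equiv
      (((h.F_equiv hi (h.lp hi)).sub' _).sub' _)

end QBD

/-- An effective divisor of degree two is a sum of two points. -/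
theorem eff_two (E : V → ℤ) (hE : Effective E) (hd : degree E = 2) :
    ∃ x y, E = Pi.single x 1 + Pi.single y 1 := by
  have step : ∀ (E : V → ℤ), Effective E → 0 < degree E →
      ∃ x, Effective (E - Pi.single x 1) ∧ degree (E - Pi.single x 1) = degree E - 1 := by
    intro E hE hd
    obtain ⟨x, -, hx⟩ : ∃ x ∈ Finset.univ, 0 < E x := by
      by_contra hcon
      push Not at hcon
      have : degree E ≤ 0 := Finset.sum_nonpos hcon
      omega
    refine ⟨x, fun w => ?_, ?_⟩
    · by_cases hw : w = x
      · subst hw; simp; omega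
      · simp [hw, hE w]
    · simp [degree, Finset.sum_sub_distrib]
  obtain ⟨x, hx, hxd⟩ := step E hE (by omega)
  obtain ⟨y, hy, hyd⟩ := step _ hx (by omega)
  refine ⟨x, y, ?_⟩
  have h0 : ∀ w, (E - Pi.single x 1 - Pi.single y 1 : V → ℤ) w = 0 := by
    intro w
    exact (Finset.sum_eq_zero_iff_of_nonneg (fun w _ => hy w)).1
      (show ∑ w, (E - Pi.single x 1 - Pi.single y 1 : V → ℤ) w = 0 by
        have : degree (E - Pi.single x 1 - Pi.single y 1) = 0 := by omega
        exact this) w (Finset.mem_univ w)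
  funext w
  have := h0 w
  simp only [Pi.sub_apply, Pi.add_apply] at *
  linarith


namespace QBD

variable {G : Multigraph V} {q : ℕ → ℕ} {ℓ : V → ℕ × ℕ} {p : ℕ → V} {n : ℕ}

theorem ne_p (h : QBD G (n + 1) q ℓ p) {u : V} (hu : (ℓ u).1 = n + 1) : u ≠ p n := by
  rintro rfl
  rw [h.lp (by omega)] at hu; omega

theorem F_top (h : QBD G (n + 1) q ℓ p) {u : V} (hu : (ℓ u).1 = n + 1) : F q ℓ p n u = 1 := by
  rw [F, if_neg (h.ne_p hu), if_pos hu]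

theorem F_low {u : V} (hu : (ℓ u).1 ≤ n) (hup : u ≠ p n) : F q ℓ p n u = 0 := by
  rw [F, if_neg hup, if_neg (by omega)]

theorem F_p : F q ℓ p n (p n) = (qbK q n : ℤ) + 1 := by
  rw [F, if_pos rfl]

/-- If `p n` burns and the chips are few, then everything burns. -/
theorem burn_all (h : QBD G (n + 1) q ℓ p) {D : V → ℤ} {A : Finset V} (hl : G.Legal D A)
    (hp : p n ∉ A) (h0 : ∀ x, (ℓ x).1 ≤ n → x ≠ p n → D x ≤ 0)
    (h1 : ∀ x, (ℓ x).1 = n + 1 → D x ≤ 1) : A = ∅ := by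
  rw [Finset.eq_empty_iff_forall_notMem]
  intro x
  by_cases hx : (ℓ x).1 ≤ n
  · exact h.burn_down hl n (by omega) hp h0 x hx
  · intro hxA
    have hxl : (ℓ x).1 = n + 1 := by have := h.le_m x; omega
    have h2 := hl.one hxA hp
    rw [h.mult_down (by omega) hxl] at h2
    have := h1 x hxl
    have := qbK_pos q n
    push_cast at h2
    omega

theorem F_reduced (h : QBD G (n + 1) q ℓ p) : G.Reduced (p n) (F q ℓ p n) := by
  refine ⟨fun w _ => by unfold F; split_ifs <;> positivity, fun U hU hv => ?_⟩
  by_contra hcon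
  push Not at hcon
  have hl : G.Legal (F q ℓ p n) U := fun x hx => by linarith [hcon x hx]
  have := h.burn_all hl hv (fun x hx hxp => by rw [F_low hx hxp])
    (fun x hx => by rw [h.F_top hx])
  exact hU.ne_empty this

theorem F_rank (h : QBD G (n + 1) q ℓ p) : G.rank (F q ℓ p n) = 2 := by
  apply IsGreatest.csSup_eq
  constructor
  · intro E hE hd
    obtain ⟨x, y, rfl⟩ := eff_two E hE hd
    refine (h.win_F le_rfl (h.win_T n (by omega)) x y (h.le_m x) (h.le_m y)).mono fun w => ?_
    simp only [Pi.sub_apply, Pi.add_apply]; linarith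
  · intro r hr
    by_contra hr2
    push Not at hr2
    have hlu : (ℓ (p (n + 1))).1 = n + 1 := h.lp le_rfl
    have hne := h.ne_p hlu
    set u := p (n + 1) with hu
    set E : V → ℤ := Pi.single u 2 + Pi.single (p n) (r - 2) with hEdef
    have hE0 : ∀ w, 0 ≤ E w := by
      intro w
      simp only [hEdef, Pi.add_apply, Pi.single_apply]
      split_ifs <;> omega
    have hw := hr E hE0 (by simp [degree, hEdef, Finset.sum_add_distrib])
    have hEu : E u = 2 := by simp [hEdef, hne]
    have hEp : E (p n) = r - 2 := by simp [hEdef, hne.symm]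
    obtain ⟨A, hA, huA, hl⟩ := hw.legal (w := u) (by rw [hEu, h.F_top hlu]; norm_num)
    refine hA.ne_empty (h.burn_all hl ?_ ?_ ?_)
    · intro hpA
      have h1 := hl.one hpA huA
      rw [h.mult_up (by omega) hlu, hEp, F_p] at h1
      push_cast at h1
      linarith
    · intro x hx hxp
      have := hE0 x
      simp only [F_low hx hxp]; linarith
    · intro x hx
      have := hE0 x
      simp only [h.F_top hx]; linarith

theorem eq_of_le {D E : V → ℤ} (hle : ∀ x, E x ≤ D x) (hs : ∑ x, D x ≤ ∑ x, E x) : D = E := by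
  funext x
  have h1 := (Finset.sum_eq_sum_iff_of_le (s := Finset.univ) (fun x _ => hle x)).1
    (le_antisymm (Finset.sum_le_sum fun x _ => hle x) hs)
  exact (h1 x (Finset.mem_univ x)).symm

theorem unique (h : QBD G (n + 1) q ℓ p) (hK : 2 < qbK q (n + 1)) (D : V → ℤ)
    (hD : G.Reduced (p n) D) (hdeg : ∑ x, D x = (qbK q (n + 1) : ℤ) + 1)
    (hw : ∀ x y, G.Winnable (D - Pi.single x 1 - Pi.single y 1)) : D = F q ℓ p n := by
  have hmono : ∀ x y w, (D - Pi.single x 1 - Pi.single y 1 : V → ℤ) w ≤ D w := by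
    intro x y w
    simp only [Pi.sub_apply, Pi.single_apply]
    split_ifs <;> linarith
  by_cases hz : ∃ u, (ℓ u).1 = n + 1 ∧ D u = 0
  · exfalso
    obtain ⟨u, hu, hu0⟩ := hz
    have hup := h.ne_p hu
    obtain ⟨A, hA, huA, hl⟩ := (hw (p n) u).legal (w := u) (by simp [hu0, hup])
    have hpA := hD.mem hA (hl.mono (hmono _ _))
    obtain ⟨t, ht1, htq, hv, hx, hct, hc⟩ := h.count le_rfl hl hpA hu huA
    have hv' : (t : ℤ) * (qbK q n + 1) + 1 ≤ D (p n) := by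
      have : (D - Pi.single (p n) 1 - Pi.single u 1 : V → ℤ) (p n) = D (p n) - 1 := by
        simp [hup.symm]
      linarith
    have hx' : ∀ x ∈ A, (ℓ x).1 = n + 1 → (t : ℤ) ≤ D x := fun x h1 h2 =>
      (hx x h1 h2).trans (hmono _ _ _)
    have hD0 : ∀ x, 0 ≤ D x := by
      intro x
      by_cases hxp : x = p n
      · rw [hxp]; refine le_trans ?_ hv'; positivity
      · exact hD.1 x hxp
    -- the lower bound divisor
    set L : ℤ → V → ℤ := fun s w => (Pi.single (p n) (s * (qbK q n + 1) + 1) : V → ℤ) w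
      + if (ℓ w).1 = n + 1 ∧ w ∈ A then s else 0 with hL
    have hLle : ∀ w, L t w ≤ D w := by
      intro w
      simp only [hL]
      by_cases hwp : w = p n
      · have : ¬ ((ℓ w).1 = n + 1 ∧ w ∈ A) := fun e => h.ne_p e.1 hwp
        rw [if_neg this, hwp]; simpa using hv'
      · rw [Pi.single_eq_of_ne hwp, zero_add]
        split_ifs with h1
        · exact hx' w h1.2 h1.1
        · exact hD0 w
    have hLs : ∑ w, L t w = t * (qbK q n + 1) + 1 + (q (n + 1) - t) * t := by
      have : ((Finset.univ.filter fun x => (ℓ x).1 = n + 1 ∧ x ∈ A).card : ℤ)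
          = q (n + 1) - t := by
        rw [← hc]; push_cast; ring
      simp only [hL, Finset.sum_add_distrib, ← Finset.sum_filter, Finset.sum_const,
        nsmul_eq_mul, this]
      simp
    have hKs : (qbK q (n + 1) : ℤ) = qbK q n + q (n + 1) := by rw [qbK_succ]; push_cast; ring
    have hK0 : (1 : ℤ) ≤ qbK q n := by exact_mod_cast qbK_pos q n
    have ht : t = 1 := by
      have h1 := Finset.sum_le_sum fun w (_ : w ∈ Finset.univ) => hLle w
      rw [hLs, hdeg, hKs] at h1
      by_contra hne
      have h2 : (2 : ℤ) ≤ t := by exact_mod_cast (show 2 ≤ t by omega)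
      have h3 : (t : ℤ) ≤ q (n + 1) := by exact_mod_cast htq
      nlinarith [mul_nonneg (show (0 : ℤ) ≤ t - 2 by linarith)
        (show (0 : ℤ) ≤ qbK q n + q (n + 1) - t by linarith)]
    subst ht
    have hDL : D = L (1 : ℕ) := eq_of_le hLle (by rw [hLs, hdeg, hKs]; push_cast; linarith)
    have hDp : D (p n) = qbK q n + 2 := by
      rw [hDL]
      have : ¬ ((ℓ (p n)).1 = n + 1 ∧ p n ∈ A) := fun e => h.ne_p e.1 rfl
      simp only [hL, if_neg this]; simp; ring
    have hDlow : ∀ x, (ℓ x).1 ≤ n → x ≠ p n → D x = 0 := by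
      intro x hx hxp
      rw [hDL]
      have : ¬ ((ℓ x).1 = n + 1 ∧ x ∈ A) := fun e => by omega
      simp only [hL, if_neg this]; simp [hxp]
    have hDtop : ∀ x, (ℓ x).1 = n + 1 → D x ≤ 1 := by
      intro x hx
      rw [hDL]
      simp only [hL, Pi.single_eq_of_ne (h.ne_p hx)]
      split_ifs <;> simp
    by_cases hq : ∃ y, (ℓ y).1 = n + 1 ∧ y ≠ u
    · obtain ⟨y, hy, hyu⟩ := hq
      obtain ⟨B, hB, hyB, hlB⟩ := (hw y y).legal (w := y) (by
        have := hDtop y hy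
        simp; linarith)
      have huB : u ∉ B := by
        intro huB
        have h1 := hlB.one huB hyB
        rw [h.mult_same hyu.symm (by omega)] at h1
        simp [hu0, hyu.symm] at h1
      refine hB.ne_empty (h.burn_all hlB ?_ ?_ ?_)
      · intro hpB
        have h1 := hlB.sub {u, y} hpB (by simp [huB, hyB])
        rw [Finset.sum_pair hyu.symm, h.mult_up (by omega) hu, h.mult_up (by omega) hy] at h1
        have h2 := hmono y y (p n)
        rw [hDp] at h2
        push_cast at h1
        linarith
      · intro x hx hxp
        exact (hmono y y x).trans (hDlow x hx hxp).le
      · intro x hx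
        exact (hmono y y x).trans (hDtop x hx)
    · push Not at hq
      have hq1 : q (n + 1) = 1 := by
        rw [← h.card_level (i := n + 1) (by omega) le_rfl, Finset.card_eq_one]
        refine ⟨u, ?_⟩
        ext x
        simp only [Finset.mem_filter, Finset.mem_univ, true_and, Finset.mem_singleton]
        exact ⟨hq x, fun e => e ▸ hu⟩
      obtain ⟨k, rfl⟩ : ∃ k, n = k + 1 := by
        cases n with
        | zero => rw [qbK_succ, hq1] at hK; simp [qbK] at hK
        | succ k => exact ⟨k, rfl⟩
      have hlw : (ℓ (p k)).1 = k := h.lp (by omega)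
      have hlp : (ℓ (p (k + 1))).1 = k + 1 := h.lp (by omega)
      have hwp : p k ≠ p (k + 1) := fun e => by rw [e] at hlw; omega
      have hwu : p k ≠ u := fun e => by rw [e] at hlw; omega
      have hw0 := hDlow (p k) (by omega) hwp
      obtain ⟨B, hB, huB, hlB⟩ := (hw (p k) u).legal (w := u) (by
        simp [hu0, hwu.symm])
      have hwB : p k ∉ B := by
        intro hwB
        have h1 := hlB.one hwB huB
        have h2 : (D - Pi.single (p k) 1 - Pi.single u 1 : V → ℤ) (p k) = -1 := by
          simp [hw0, hwu]
        rw [h2] at h1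
        have : (0 : ℤ) ≤ G.mult (p k) u := by positivity
        linarith
      refine hB.ne_empty (h.burn_all hlB ?_ ?_ ?_)
      · intro hpB
        have h1 := hlB.sub {p k, u} hpB (by simp [huB, hwB])
        rw [Finset.sum_pair hwu, h.mult_up (by omega) hu, h.mult_down (by omega) hlp] at h1
        have h2 := hmono (p k) u (p (k + 1))
        rw [hDp] at h2
        have : (1 : ℤ) ≤ qbK q k := by exact_mod_cast qbK_pos q k
        push_cast at h1
        linarith
      · intro x hx hxp
        exact (hmono _ _ x).trans (hDlow x hx hxp).le
      · intro x hx
        exact (hmono _ _ x).trans (hDtop x hx)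
  · push Not at hz
    have hz' : ∀ u, (ℓ u).1 = n + 1 → 1 ≤ D u := by
      intro u hu
      have h1 := hD.1 u (h.ne_p hu)
      have h2 := hz u hu
      omega
    by_cases ho : ∃ u, (ℓ u).1 = n + 1 ∧ D u = 1
    · obtain ⟨u, hu, hu1⟩ := ho
      obtain ⟨A, hA, huA, hl⟩ := (hw u u).legal (w := u) (by simp [hu1])
      have hl' := hl.mono (hmono _ _)
      have hpA := hD.mem hA hl'
      have h1 := hl'.one hpA huA
      rw [h.mult_up (by omega) hu] at h1
      push_cast at h1
      refine eq_of_le (fun x => ?_) (by rw [hdeg, h.degree_F le_rfl])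
      unfold F
      split_ifs with h2 h3
      · rw [h2]; exact h1
      · exact hz' x h3
      · exact hD.1 x h2
    · exfalso
      push Not at ho
      have h1 := h.gon_one n (by omega) (D - Pi.single (p n) 1)
        (hD.change fun x hx => by simp [hx]) (fun w => hw _ w)
      have h2 : ∑ x, D x = ∑ x ∈ Finset.univ.filter (fun x => (ℓ x).1 ≤ n), D x
        + ∑ x ∈ Finset.univ.filter (fun x => (ℓ x).1 = n + 1), D x := by
        rw [← lower_split]
        congr 1
        ext x; simp [h.le_m x]
      have h3 := Finset.card_nsmul_le_sum (Finset.univ.filter fun x => (ℓ x).1 = n + 1) D 2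
        (fun x hx => by
          have hx' : (ℓ x).1 = n + 1 := by simpa using hx
          have a := hz' x hx'
          have b := ho x hx'
          omega)
      rw [h.card_level (by omega) le_rfl] at h3
      have h4 : ∑ x ∈ Finset.univ.filter (fun x => (ℓ x).1 ≤ n), (Pi.single (p n) 1 : V → ℤ) x
          = 1 := by
        rw [Finset.sum_eq_single (p n)]
        · simp
        · intro x _ hx; simp [hx]
        · intro hx; simp [h.lp (show n ≤ n + 1 by omega)] at hx
      simp only [Pi.sub_apply, Finset.sum_sub_distrib, h4] at h1
      have h5 := h.lab.1 (n + 1) (by omega) le_rfl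
      rw [hdeg, qbK_succ] at h2
      push_cast at h2
      simp only [nsmul_eq_mul] at h3
      have : (1 : ℤ) ≤ q (n + 1) := by exact_mod_cast h5
      linarith

end QBD

/-- For a quasi-banana graph `G = QB_m(q_1, …, q_m)` with `m ≥ 1`,
`k_{m-1} = ∑_{i=1}^{m-1} q_i + 1`, `k_m = ∑_{i=1}^{m} q_i + 1` and `k_m > 2`, the divisor
`D' = (k_{m-1}+1)·u_{m-1,1} + ∑_{j=1}^{q_m} u_{m,j}` is the unique `u_{m-1,1}`-reduced
divisor on `G` of degree `k_m + 1` and rank `2`. -/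
theorem stmt18 (G : Multigraph V)
    (m : ℕ) (hm : 1 ≤ m) (q : ℕ → ℕ) (ℓ : V → ℕ × ℕ)
    (hQB : G.IsQBLabelling m q ℓ)
    (km1 km : ℕ)
    (hkm1 : km1 = (∑ i ∈ Finset.Icc 1 (m - 1), q i) + 1)
    (hkm : km = (∑ i ∈ Finset.Icc 1 m, q i) + 1)
    (hkm2 : 2 < km)
    (vm : V) (hvm : ℓ vm = (m - 1, 1))
    (D' : V → ℤ)
    (hD' : D' = fun w => if w = vm then (km1 : ℤ) + 1 else if (ℓ w).1 = m then 1 else 0) :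
    G.Reduced vm D' ∧ Multigraph.degree D' = (km : ℤ) + 1 ∧ G.rank D' = 2 ∧
    ∀ D'' : V → ℤ, G.Reduced vm D'' → Multigraph.degree D'' = (km : ℤ) + 1 →
      G.rank D'' = 2 → D'' = D' := by
  obtain ⟨n, rfl⟩ : ∃ n, m = n + 1 := ⟨m - 1, by omega⟩
  have hex : ∀ i, ∃ v, i ≤ n + 1 → ℓ v = (i, 1) := by
    intro i
    by_cases hi : i ≤ n + 1
    · obtain ⟨v, hv⟩ := hQB.2.2.2.1 i 1 hi le_rfl (by
        unfold qbSize
        split_ifs with h0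
        · exact le_rfl
        · exact hQB.1 i (by omega) hi)
      exact ⟨v, fun _ => hv⟩
    · exact ⟨vm, fun h => absurd h hi⟩
  choose p hp using hex
  have h : QBD G (n + 1) q ℓ p := ⟨hQB, hp⟩
  have hvp : vm = p n := hQB.2.1 (by rw [hvm, hp n (by omega)]; simp)
  have hk1 : km1 = qbK q n := by rw [hkm1]; simp [qbK]
  have hk : km = qbK q (n + 1) := hkm
  have hDF : D' = QBD.F q ℓ p n := by
    rw [hD', hvp, hk1]; rfl
  rw [hDF, hvp, hk]
  refine ⟨h.F_reduced, h.degree_F le_rfl, h.F_rank, fun D'' hr hd hrk => ?_⟩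
  exact h.unique (hk ▸ hkm2) D'' hr hd (Multigraph.rank_two hrk)
end

section
/- Let G be a gonality-tight graph with a vertex v such that removing v leaves the disjoint union of two (possibly disconnected or empty) subgraphs G' and G'', and suppose that for some integer k ≥ 1 the divisor D_2 = (k+1)·v + Σ_{w∈V(G')} w is v-reduced and realises the second gonality of G. Then the divisor k·v has rank at least 1 as a divisor on the subgraph G'' ∪ {v}; in particular, for every effective divisor D on G with D(v) ≥ k and every vertex w ∈ V(G''), the divisor D - w is linearly equivalent to an effective divisor on G. -/
open Finset

variable {V : Type*} [Fintype V] [DecidableEq V]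

namespace Multigraph

theorem degree_laplacian {W : Type*} [Fintype W] [DecidableEq W] (G : Multigraph W) (f : W → ℤ) :
    ∑ w, G.laplacian f w = 0 := by
  have h : ∑ w, G.laplacian f w = - ∑ w, G.laplacian f w := by
    conv_lhs => simp only [laplacian]
    rw [Finset.sum_comm, ← Finset.sum_neg_distrib]
    refine Finset.sum_congr rfl fun w _ => ?_
    simp only [laplacian]
    rw [← Finset.sum_neg_distrib]
    refine Finset.sum_congr rfl fun u _ => ?_
    rw [G.symm u w]
    ring
  omega

theorem rank_bddAbove {W : Type*} [Fintype W] [DecidableEq W] (G : Multigraph W) (v : W)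
    (D : W → ℤ) :
    BddAbove {r : ℤ | ∀ E : W → ℤ, Effective E → degree E = r →
      G.Winnable (fun w => D w - E w)} := by
  refine ⟨|degree D|, fun r hr => ?_⟩
  by_cases h0 : r ≤ 0
  · exact h0.trans (abs_nonneg _)
  obtain ⟨F, hF, f, hf⟩ := hr (fun x => if x = v then r else 0)
    (fun x => by dsimp only; split_ifs <;> omega) (by simp [degree])
  have h1 : 0 ≤ ∑ x, F x := Finset.sum_nonneg fun x _ => hF x
  rw [hf] at h1
  simp only [Pi.sub_apply, Finset.sum_sub_distrib, degree_laplacian, Finset.sum_ite_eq',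
    Finset.mem_univ, if_true] at h1
  have h2 := le_abs_self (degree D)
  unfold degree at *
  omega

theorem eq_single_of_degree_one {W : Type*} [Fintype W] [DecidableEq W] (E : W → ℤ)
    (hE : Effective E) (h1 : degree E = 1) : ∃ w, ∀ x, E x = if x = w then 1 else 0 := by
  have hex : ∃ w, 0 < E w := by
    by_contra! h
    have : ∑ x, E x ≤ 0 := Finset.sum_nonpos fun x _ => h x
    unfold degree at h1
    omega
  obtain ⟨w, hw⟩ := hex
  refine ⟨w, fun x => ?_⟩
  unfold degree at h1
  have h2 := Finset.add_sum_erase Finset.univ E (Finset.mem_univ w)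
  have h3 : 0 ≤ ∑ y ∈ Finset.univ.erase w, E y := Finset.sum_nonneg fun y _ => hE y
  split_ifs with hx
  · subst hx; omega
  · have h4 : E x ≤ ∑ y ∈ Finset.univ.erase w, E y :=
      Finset.single_le_sum (f := E) (fun y _ => hE y) (by simp [hx])
    have := hE x
    omega

/-- If `D` is `v`-reduced and `D - Δ f` is nonnegative wherever `f > f v`, then `f ≤ f v`. -/
theorem le_of_reduced (G : Multigraph V) (v : V) (D : V → ℤ) (hred : G.Reduced v D)
    (f : V → ℤ) (h : ∀ w, f v < f w → 0 ≤ D w - G.laplacian f w) : ∀ w, f w ≤ f v := by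
  obtain ⟨m, -, hm⟩ := Finset.exists_max_image Finset.univ f ⟨v, Finset.mem_univ v⟩
  by_contra! hw
  obtain ⟨w, hw⟩ := hw
  have hmv : f v < f m := hw.trans_le (hm w (Finset.mem_univ w))
  obtain ⟨x, hx, hneg⟩ := hred.2 (Finset.univ.filter fun x => f x = f m) ⟨m, by simp⟩
    (by simp only [Finset.mem_filter, Finset.mem_univ, true_and]; omega)
  simp only [Finset.mem_filter, Finset.mem_univ, true_and] at hx
  have h1 := h x (by omega)
  have h2 : ∑ u ∈ (Finset.univ.filter fun x => f x = f m)ᶜ, (G.mult x u : ℤ)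
      ≤ G.laplacian f x := by
    unfold laplacian
    rw [← Finset.sum_add_sum_compl (Finset.univ.filter fun x => f x = f m)]
    have h3 : 0 ≤ ∑ u ∈ Finset.univ.filter (fun x => f x = f m),
        (G.mult x u : ℤ) * (f x - f u) :=
      Finset.sum_nonneg fun u _ => mul_nonneg (by positivity)
        (by have := hm u (Finset.mem_univ u); omega)
    refine le_add_of_nonneg_of_le h3 (Finset.sum_le_sum fun u hu => ?_)
    simp only [Finset.mem_compl, Finset.mem_filter, Finset.mem_univ, true_and] at hu
    have := hm u (Finset.mem_univ u)
    exact le_mul_of_one_le_right (by positivity) (by omega)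
  omega

theorem key (G : Multigraph V) (v : V) (A B : Finset V)
    (hAB : A ∪ B = Finset.univ.erase v) (hdisj : Disjoint A B)
    (hnoedge : ∀ a ∈ A, ∀ b ∈ B, G.mult a b = 0) (k : ℕ) (D₂ : V → ℤ)
    (hD₂ : D₂ = fun w => if w = v then (k : ℤ) + 1 else if w ∈ A then 1 else 0)
    (hred : G.Reduced v D₂) (hrank : G.rank D₂ = 2) (w : V) (hw : w ∈ B) :
    ∃ g : V → ℤ, (∀ x, x ∉ B → g x = 0) ∧
      ∀ x, 0 ≤ (if x = v then (k : ℤ) else 0) - (if x = w then 1 else 0) - G.laplacian g x := by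
  have hmem : ∀ x, x ≠ v → x ∈ A ∨ x ∈ B := fun x hx => by
    rw [← Finset.mem_union, hAB]; simp [hx]
  have hvA : v ∉ A := fun h => by
    have := Finset.mem_union_left B h
    rw [hAB] at this; simp at this
  have hvB : v ∉ B := fun h => by
    have := Finset.mem_union_right A h
    rw [hAB] at this; simp at this
  have hABd : ∀ x, x ∈ A → x ∉ B := fun x hx hx' => Finset.disjoint_left.1 hdisj hx hx'
  have h2 := Int.csSup_mem (s := {r : ℤ | ∀ E : V → ℤ, Effective E → degree E = r →
      G.Winnable (fun w => D₂ w - E w)}) ⟨-1, fun E hE hd => by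
        have : 0 ≤ ∑ x, E x := Finset.sum_nonneg fun x _ => hE x
        unfold degree at hd
        omega⟩ (G.rank_bddAbove v D₂)
  change G.rank D₂ ∈ _ at h2
  rw [hrank] at h2
  obtain ⟨F, hF, f, hf⟩ := h2
    (fun x => (if x = v then 1 else 0) + (if x = w then 1 else 0))
    (fun x => by dsimp only; split_ifs <;> omega)
    (by simp [degree, Finset.sum_add_distrib])
  have hwv : w ≠ v := fun h => hvB (h ▸ hw)
  have hFx : ∀ x, 0 ≤ D₂ x - ((if x = v then 1 else 0) + (if x = w then 1 else 0))
      - G.laplacian f x := fun x => by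
    have := hF x
    rw [hf] at this
    exact this
  -- the two halves of the firing script
  let p : V → ℤ := fun x => if x ∈ A then f x - f v else 0
  let g : V → ℤ := fun x => if x ∈ B then f x - f v else 0
  have hpv : p v = 0 := by simp [p, hvA]
  have hgv : g v = 0 := by simp [g, hvB]
  have hsplit : ∀ x, f x = f v + p x + g x := fun x => by
    by_cases hx : x = v
    · subst hx; omega
    rcases hmem x hx with h | h
    · simp [p, g, h, hABd x h]
    · have : x ∉ A := fun h' => hABd x h' h
      simp [p, g, h, this]
  have hlap : ∀ x, G.laplacian f x = G.laplacian p x + G.laplacian g x := fun x => by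
    unfold laplacian
    rw [← Finset.sum_add_distrib]
    refine Finset.sum_congr rfl fun u _ => ?_
    rw [hsplit x, hsplit u]; ring
  have hgA : ∀ x ∈ A, G.laplacian g x = 0 := fun x hx => by
    unfold laplacian
    refine Finset.sum_eq_zero fun u _ => ?_
    by_cases hu : u ∈ B
    · simp [hnoedge x hx u hu]
    · simp [g, hu, hABd x hx]
  have hpB : ∀ x ∈ B, G.laplacian p x = 0 := fun x hx => by
    unfold laplacian
    refine Finset.sum_eq_zero fun u _ => ?_
    by_cases hu : u ∈ A
    · simp [G.symm x u, hnoedge u hu x hx]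
    · have : x ∉ A := fun h' => hABd x h' hx
      simp [p, hu, this]
  have hple := G.le_of_reduced v D₂ hred p (fun x hx => by
    have hxA : x ∈ A := by
      by_contra h
      simp [p, h, hvA] at hx
    have h1 := hFx x
    have h3 : x ≠ v := fun h => hvA (h ▸ hxA)
    have h4 : x ≠ w := fun h => hABd x hxA (h ▸ hw)
    rw [hlap, hgA x hxA] at h1
    simp only [h3, h4, if_false] at h1
    omega)
  have hpv0 : 0 ≤ G.laplacian p v := Finset.sum_nonneg fun u _ =>
    mul_nonneg (by positivity) (by have := hple u; omega)
  refine ⟨g, fun x hx => by simp [g, hx], fun x => ?_⟩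
  have h1 := hFx x
  rw [hlap, hD₂] at h1
  by_cases hx : x = v
  · subst hx
    simp only [if_true, Ne.symm hwv, if_false] at h1 ⊢
    omega
  rcases hmem x hx with h | h
  · have h4 : x ≠ w := fun h' => hABd x h (h' ▸ hw)
    simp [hx, h4, hgA x h]
  · have h5 : x ∉ A := fun h' => hABd x h' h
    rw [hpB x h] at h1
    simp only [hx, h5, if_false] at h1 ⊢
    omega

end Multigraph

/-- In the setting of the structure lemma (gonality-tight `G`, cut vertex
`v` splitting off `G'` with vertex set `A` and `G''` with vertex set `B`, `v`-reduced
divisor `D₂ = (k+1)·v + ∑_{w ∈ A} w` realising the second gonality), the divisor `k·v` has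
rank at least `1` on `G'' ∪ {v}`; in particular, for every effective divisor `D` on `G`
with `D(v) ≥ k` and every `w ∈ B`, the divisor `D - w` is winnable on `G`. -/
theorem stmt19 (G : Multigraph V) (hG : G.Connected) (hGT : G.GonalityTight)
    (v : V) (A B : Finset V)
    (hAB : A ∪ B = Finset.univ.erase v) (hdisj : Disjoint A B)
    (hnoedge : ∀ a ∈ A, ∀ b ∈ B, G.mult a b = 0)
    (k : ℕ) (hk : 1 ≤ k)
    (D₂ : V → ℤ)
    (hD₂ : D₂ = fun w => if w = v then (k : ℤ) + 1 else if w ∈ A then 1 else 0)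
    (hred : G.Reduced v D₂) (hreal : G.Realises 2 D₂) :
    1 ≤ (G.induce (insert v B)).rank (fun x => if x.1 = v then (k : ℤ) else 0) ∧
    ∀ D : V → ℤ, Multigraph.Effective D → (k : ℤ) ≤ D v → ∀ w ∈ B,
      G.Winnable (fun x => D x - if x = w then 1 else 0) := by
  have hkey := G.key v A B hAB hdisj hnoedge k D₂ hD₂ hred hreal.1
  have hmem : ∀ x, x ≠ v → x ∈ A ∨ x ∈ B := fun x hx => by
    rw [← Finset.mem_union, hAB]; simp [hx]
  have hvB : v ∉ B := fun h => by
    have := Finset.mem_union_right A h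
    rw [hAB] at this; simp at this
  constructor
  · refine le_csSup (Multigraph.rank_bddAbove _ ⟨v, Finset.mem_insert_self v B⟩ _) ?_
    intro E hE hd
    obtain ⟨w, hEw⟩ := Multigraph.eq_single_of_degree_one E hE hd
    by_cases hwv : w.1 = v
    · refine ⟨_, fun x => ?_, fun _ => 0, rfl⟩
      simp only [Multigraph.laplacian, Pi.sub_apply, hEw, Subtype.ext_iff, hwv, sub_self,
        mul_zero, Finset.sum_const_zero, sub_zero]
      split_ifs <;> omega
    · have hwB : w.1 ∈ B := (Finset.mem_insert.1 w.2).resolve_left hwv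
      obtain ⟨g, hg0, hg⟩ := hkey w.1 hwB
      refine ⟨_, fun x => ?_, fun x => g x.1, rfl⟩
      have hx := hg x.1
      have hl : (G.induce (insert v B)).laplacian (fun x => g x.1) x = G.laplacian g x.1 := by
        simp only [Multigraph.laplacian, Multigraph.induce]
        rw [Finset.sum_coe_sort (insert v B) (fun u => (G.mult x.1 u : ℤ) * (g x.1 - g u))]
        refine Finset.sum_subset (Finset.subset_univ _) fun u _ hu => ?_
        rw [Finset.mem_insert, not_or] at hu
        have huA := (hmem u hu.1).resolve_right hu.2
        rcases Finset.mem_insert.1 x.2 with h | h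
        · rw [h, hg0 v hvB, hg0 u hu.2]; simp
        · rw [G.symm, hnoedge u huA _ h]; simp
      simp only [Pi.sub_apply, hEw, Subtype.ext_iff, hl]
      exact hx
  · intro D hD hDv w hw
    obtain ⟨g, -, hg⟩ := hkey w hw
    refine ⟨_, fun x => ?_, g, rfl⟩
    have hx := hg x
    have hDx := hD x
    simp only [Pi.sub_apply]
    by_cases h : x = v
    · subst h
      simp only [if_true] at hx
      omega
    · simp only [h, if_false] at hx
      omega
end
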